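/- Consider the spanning tree choice program on nodes {a,b,c} with weighted edge set g = {(a,b,1), (b,a,1), (b,c,2), (c,b,2), (a,c,3), (c,a,3)}, where the FD ({2},{3}) (Y → C) is designated as choice-least with cost coordinate 3 (Prim's program). Then every inflationary least choice fixpoint M of this program has st-atoms exactly {st(root,a,0), st(a,b,1), st(b,c,2)} (the minimum spanning tree rooted at a). In particular, the choice models whose st-atoms are {st(root,a,0), st(a,b,1), st(a,c,3)} and {st(root,a,0), st(a,c,3), st(c,b,2)} are not inflationary least choice fixpoints, so the least choice fixpoint computation is not complete for choice models. -/

import Mathlib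

/-!
After the first step every interpretation of a least choice computation is of the form
`stModelOf S` for a partial tree `S` rooted at `a`. For such an `S`, the chosen atoms in `Θ` are
exactly those of the edges leaving the set of nodes reached by `S` (`mem_theta_iff`), and adding
the chosen atom of such an edge `t` and closing under the other rules gives
`stModelOf (insert t S)` (`Tomega_insert`). So a step of the computation adds a cheapest edge
across the cut: this is Prim's algorithm. From `∅` the deterministic rules give `{(root,a,0)}`;
then the cut consists of `(a,b,1)` and `(a,c,3)`, and `(a,b,1)` is selected; then it consists of
`(b,c,2)` and `(a,c,3)`, and `(b,c,2)` is selected; then it is empty and the computation is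
stationary at `stModelOf stS1`. The two other trees differ from `stS1`, so no least choice
fixpoint has them as its `st`-atoms.
-/

/-- A ground rule: head, positive body, negative body. -/
structure GroundRule (A : Type) where
  head : A
  pos : Finset A
  neg : Finset A

/-- An interpretation `I` satisfies a ground rule. -/
def satisfiesRule {A : Type} (I : Set A) (r : GroundRule A) : Prop :=
  ((↑r.pos : Set A) ⊆ I ∧ ∀ a ∈ r.neg, a ∉ I) → r.head ∈ I

/-- `I` is a model of the ground program `P`. -/
def isModel {A : Type} (P : Set (GroundRule A)) (I : Set A) : Prop :=
  ∀ r ∈ P, satisfiesRule I r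

/-- The immediate consequence operator `T_P`. -/
def TP {A : Type} (P : Set (GroundRule A)) (I : Set A) : Set A :=
  { a | ∃ r ∈ P, r.head = a ∧ (↑r.pos : Set A) ⊆ I ∧ ∀ b ∈ r.neg, b ∉ I }

/-- The reduct of `P` with respect to `M`. -/
def reduct {A : Type} (P : Set (GroundRule A)) (M : Set A) : Set (GroundRule A) :=
  { r' | ∃ r ∈ P, (∀ b ∈ r.neg, b ∉ M) ∧ r' = ⟨r.head, r.pos, ∅⟩ }

/-- `M` is the least model of `P`. -/
def isLeastModel {A : Type} (P : Set (GroundRule A)) (M : Set A) : Prop :=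
  isModel P M ∧ ∀ M', isModel P M' → M ⊆ M'

/-- `M` is a stable model of `P`: it is the least model of the reduct of `P` w.r.t. `M`. -/
def isStableModel {A : Type} (P : Set (GroundRule A)) (M : Set A) : Prop :=
  isLeastModel (reduct P M) M

/-- Inflationary iteration `F^n(J)` where `F(I) = I ∪ T(I)`. -/
def iterT {A : Type} (T : Set A → Set A) (J : Set A) : ℕ → Set A
  | 0 => J
  | n + 1 => iterT T J n ∪ T (iterT T J n)

/-- `T^{↑ω}(J) = ⋃ₙ Fⁿ(J)` where `F(I) = I ∪ T(I)`. -/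
def Tomega {A : Type} (T : Set A → Set A) (J : Set A) : Set A :=
  ⋃ n, iterT T J n
/-- Node symbols of the spanning tree program. -/
inductive Nd : Type where
  | root | a | b | c
deriving DecidableEq

/-- Atoms of the spanning tree choice program: `g`, `st`, `chosen`, `diffchoice`
atoms over nodes and costs in `{0,1,2,3}`. -/
inductive STA : Type where
  | g : Nd → Nd → Fin 4 → STA
  | st : Nd → Nd → Fin 4 → STA
  | chosen : Nd → Nd → Fin 4 → STA
  | diffchoice : Nd → Nd → Fin 4 → STA
deriving DecidableEq

/-- The weighted edge set `{(a,b,1), (b,a,1), (b,c,2), (c,b,2), (a,c,3), (c,a,3)}`. -/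
def stEdges : Set (Nd × Nd × Fin 4) :=
  {(Nd.a, Nd.b, 1), (Nd.b, Nd.a, 1), (Nd.b, Nd.c, 2),
   (Nd.c, Nd.b, 2), (Nd.a, Nd.c, 3), (Nd.c, Nd.a, 3)}

/-- Two tuples `(x,y,c)`, `(x',y',c')` conflict iff they agree on coordinate 2
(`y = y'`) and differ on coordinate 1 or coordinate 3 (the FDs `Y → X`, `Y → C`). -/
def stConflict (t t' : Nd × Nd × Fin 4) : Prop :=
  t.2.1 = t'.2.1 ∧ (t.1 ≠ t'.1 ∨ t.2.2 ≠ t'.2.2)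

/-- The standard rules `P_D'`: the fact `st(root,a,0)`, the `g`-facts, and the
recursive `st` rules. -/
def stStdRules : Set (GroundRule STA) :=
  {⟨STA.st Nd.root Nd.a 0, ∅, ∅⟩} ∪
  { ru | ∃ t ∈ stEdges, ru = ⟨STA.g t.1 t.2.1 t.2.2, ∅, ∅⟩ } ∪
  { ru | ∃ (z : Nd) (c' : Fin 4), ∃ t ∈ stEdges, t.2.1 ≠ Nd.a ∧ t.2.1 ≠ t.1 ∧
      ru = ⟨STA.st t.1 t.2.1 t.2.2,
            {STA.st z t.1 c', STA.g t.1 t.2.1 t.2.2, STA.chosen t.1 t.2.1 t.2.2},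
            ∅⟩ }

/-- The chosen rules of `foe(P)`. -/
def stChosenRules : Set (GroundRule STA) :=
  { ru | ∃ (z : Nd) (c' : Fin 4), ∃ t ∈ stEdges, t.2.1 ≠ Nd.a ∧ t.2.1 ≠ t.1 ∧
      ru = ⟨STA.chosen t.1 t.2.1 t.2.2,
            {STA.st z t.1 c', STA.g t.1 t.2.1 t.2.2},
            {STA.diffchoice t.1 t.2.1 t.2.2}⟩ }

/-- The diffchoice rules of `foe(P)`. -/
def stDiffRules : Set (GroundRule STA) :=
  { ru | ∃ t t' : Nd × Nd × Fin 4, stConflict t t' ∧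
      ru = ⟨STA.diffchoice t.1 t.2.1 t.2.2, {STA.chosen t'.1 t'.2.1 t'.2.2}, ∅⟩ }

/-- `foe` of the spanning tree choice program. -/
def stFoe : Set (GroundRule STA) := stStdRules ∪ stChosenRules ∪ stDiffRules

/-- The interpretation determined by a set `S` of `st`-triples: all `g`-facts,
the `st`-atoms of `S`, the corresponding chosen atoms (for non-root sources),
and exactly the diffchoice atoms derivable from those chosen atoms. -/
def stModelOf (S : Set (Nd × Nd × Fin 4)) : Set STA :=
  { x | ∃ t ∈ stEdges, x = STA.g t.1 t.2.1 t.2.2 } ∪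
  { x | ∃ t ∈ S, x = STA.st t.1 t.2.1 t.2.2 } ∪
  { x | ∃ t ∈ S, t.1 ≠ Nd.root ∧ x = STA.chosen t.1 t.2.1 t.2.2 } ∪
  { x | ∃ t t' : Nd × Nd × Fin 4, t' ∈ S ∧ t'.1 ≠ Nd.root ∧ stConflict t t' ∧
        x = STA.diffchoice t.1 t.2.1 t.2.2 }

/-- The st-triples of the three candidate choice models. -/
def stS1 : Set (Nd × Nd × Fin 4) := {(Nd.root, Nd.a, 0), (Nd.a, Nd.b, 1), (Nd.b, Nd.c, 2)}
def stS2 : Set (Nd × Nd × Fin 4) := {(Nd.root, Nd.a, 0), (Nd.a, Nd.b, 1), (Nd.a, Nd.c, 3)}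
def stS3 : Set (Nd × Nd × Fin 4) := {(Nd.root, Nd.a, 0), (Nd.a, Nd.c, 3), (Nd.c, Nd.b, 2)}

/-- `S` satisfies `FD_P` for the spanning tree program: no two chosen atoms have
conflicting tuples. -/
def stSatFD (S : Set STA) : Prop :=
  ∀ t t' : Nd × Nd × Fin 4, STA.chosen t.1 t.2.1 t.2.2 ∈ S →
    STA.chosen t'.1 t'.2.1 t'.2.2 ∈ S → ¬ stConflict t t'

/-- `T_{P_C}` for the spanning tree program. -/
def stTPC : Set STA → Set STA := TP stChosenRules

/-- `T_{P_D}` for the spanning tree program. -/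
def stTPD : Set STA → Set STA := TP (stStdRules ∪ stDiffRules)

/-- `Θ_I` for the spanning tree program. -/
def stTheta (I : Set STA) : Set STA :=
  { d | d ∈ stTPC I \ I ∧ stSatFD (I ∪ {d}) }

/-- The cost order on chosen atoms: `chosen(t) < chosen(t')` iff `t(3) < t'(3)`. -/
def stLt (u v : STA) : Prop :=
  ∃ (x y : Nd) (k : Fin 4) (x' y' : Nd) (k' : Fin 4),
    u = STA.chosen x y k ∧ v = STA.chosen x' y' k' ∧ k < k'

/-- `least(Θ)`. -/
def stLeast (T : Set STA) : Set STA :=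
  { t | t ∈ T ∧ ¬ ∃ u ∈ T, stLt u t }

/-- `Γ_P^least(I)` for Prim's program. -/
def stGammaLeast (I : Set STA) : Set (Set STA) :=
  { J | (∃ d ∈ stLeast (stTheta I), J = I ∪ {d}) ∨ (stTheta I = ∅ ∧ J = I) }

/-- `Ψ_P^least(I)` for Prim's program. -/
def stPsiLeast (I : Set STA) : Set (Set STA) :=
  { K | ∃ J ∈ stGammaLeast I, K = Tomega stTPD J }

/-- An inflationary least choice fixpoint computation for Prim's program. -/
def stIsLeastComputation (Iseq : ℕ → Set STA) : Prop :=
  Iseq 0 = ∅ ∧ ∀ n, Iseq (n + 1) ∈ stPsiLeast (Iseq n)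

/-- The st-triples of an interpretation. -/
def stOf (M : Set STA) : Set (Nd × Nd × Fin 4) :=
  { t | STA.st t.1 t.2.1 t.2.2 ∈ M }

/-! ### Partial trees and the atoms of their interpretations -/

/-- A partial tree: a set of `st`-triples that contains the fact `st(root,a,0)`, has no other
triple with source `root`, and enters every node at most once. -/
structure IsPartialTree (S : Set (Nd × Nd × Fin 4)) : Prop where
  base : (Nd.root, Nd.a, 0) ∈ S
  root_only : ∀ t ∈ S, t.1 = Nd.root → t = (Nd.root, Nd.a, 0)
  enter_once : ∀ t ∈ S, ∀ t' ∈ S, t.2.1 = t'.2.1 → t = t'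

/-- The node `y` is entered by some triple of `S`. -/
def Reached (S : Set (Nd × Nd × Fin 4)) (y : Nd) : Prop :=
  ∃ z k, (z, y, k) ∈ S

/-- The edges crossing the cut between reached and unreached nodes. -/
def cutEdges (S : Set (Nd × Nd × Fin 4)) : Set (Nd × Nd × Fin 4) :=
  { t | t ∈ stEdges ∧ Reached S t.1 ∧ ¬ Reached S t.2.1 }

section membership

variable (S : Set (Nd × Nd × Fin 4)) (x y : Nd) (k : Fin 4)

theorem g_mem_modelOf : STA.g x y k ∈ stModelOf S ↔ (x, y, k) ∈ stEdges := by
  simp only [stModelOf, Set.mem_union, Set.mem_ofPred_eq]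
  grind

theorem st_mem_modelOf : STA.st x y k ∈ stModelOf S ↔ (x, y, k) ∈ S := by
  simp only [stModelOf, Set.mem_union, Set.mem_ofPred_eq]
  grind

theorem chosen_mem_modelOf :
    STA.chosen x y k ∈ stModelOf S ↔ (x, y, k) ∈ S ∧ x ≠ Nd.root := by
  simp only [stModelOf, Set.mem_union, Set.mem_ofPred_eq]
  grind

theorem diff_mem_modelOf :
    STA.diffchoice x y k ∈ stModelOf S ↔
      ∃ t' ∈ S, t'.1 ≠ Nd.root ∧ stConflict (x, y, k) t' := by
  simp only [stModelOf, Set.mem_union, Set.mem_ofPred_eq]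
  grind

end membership

theorem edge_source_ne_root {t : Nd × Nd × Fin 4} (ht : t ∈ stEdges) :
    t.1 ≠ Nd.root ∧ t.2.1 ≠ t.1 := by
  simp only [stEdges, Set.mem_insert_iff, Set.mem_singleton_iff] at ht
  rcases ht with rfl | rfl | rfl | rfl | rfl | rfl <;> simp

/-! ### Closure under the deterministic rules -/

theorem iterT_subset {A : Type} {T : Set A → Set A} (hT : Monotone T) {J K : Set A}
    (hJ : J ⊆ K) (hK : T K ⊆ K) (n : ℕ) : iterT T J n ⊆ K := by
  induction n with
  | zero => exact hJ
  | succ n ih => exact Set.union_subset ih ((hT ih).trans hK)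

/-- A closed set containing `J` and reached after one step is the closure of `J`. -/
theorem Tomega_eq {A : Type} {T : Set A → Set A} (hT : Monotone T) {J K : Set A}
    (hJ : J ⊆ K) (hK : T K ⊆ K) (h1 : K ⊆ J ∪ T J) : Tomega T J = K :=
  Set.Subset.antisymm (Set.iUnion_subset (iterT_subset hT hJ hK))
    (h1.trans (Set.subset_iUnion (iterT T J) 1))

/-- The rules other than the chosen rules have empty negative bodies. -/
theorem stTPD_mono : Monotone stTPD := by
  rintro I J hIJ x ⟨r, hr, hx, hpos, -⟩
  refine ⟨r, hr, hx, hpos.trans hIJ, ?_⟩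
  have : r.neg = ∅ := by
    rcases hr with ((hr | ⟨t, -, hr⟩) | ⟨z, c', t, -, -, -, hr⟩) | ⟨t, t', -, hr⟩
    · rw [Set.mem_singleton_iff.1 hr]
    all_goals rw [hr]
  simp [this]

theorem stTPD_modelOf {S : Set (Nd × Nd × Fin 4)} (hS : (Nd.root, Nd.a, 0) ∈ S) :
    stTPD (stModelOf S) ⊆ stModelOf S := by
  rintro x ⟨r, hr, rfl, hpos, -⟩
  rcases hr with ((hr | ⟨t, ht, rfl⟩) | ⟨z, c', t, ht, -, -, rfl⟩) | ⟨t, t', hc, rfl⟩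
  · rw [Set.mem_singleton_iff.1 hr]
    exact (st_mem_modelOf _ _ _ _).2 hS
  · exact (g_mem_modelOf _ _ _ _).2 ht
  · have h : STA.chosen t.1 t.2.1 t.2.2 ∈ stModelOf S := hpos (by simp)
    exact (st_mem_modelOf _ _ _ _).2 ((chosen_mem_modelOf _ _ _ _).1 h).1
  · have h : STA.chosen t'.1 t'.2.1 t'.2.2 ∈ stModelOf S := hpos (by simp)
    rw [chosen_mem_modelOf] at h
    exact (diff_mem_modelOf _ _ _ _).2 ⟨t', h.1, h.2, hc⟩

theorem modelOf_mono {S S' : Set (Nd × Nd × Fin 4)} (h : S ⊆ S') :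
    stModelOf S ⊆ stModelOf S' := by
  intro x hx
  cases x <;>
    simp only [g_mem_modelOf, st_mem_modelOf, chosen_mem_modelOf, diff_mem_modelOf] at hx ⊢
  · exact hx
  · exact h hx
  · exact ⟨h hx.1, hx.2⟩
  · obtain ⟨t', ht', h'⟩ := hx
    exact ⟨t', h ht', h'⟩

theorem Tomega_self {S : Set (Nd × Nd × Fin 4)} (hS : (Nd.root, Nd.a, 0) ∈ S) :
    Tomega stTPD (stModelOf S) = stModelOf S :=
  Tomega_eq stTPD_mono subset_rfl (stTPD_modelOf hS) Set.subset_union_left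

theorem Tomega_empty : Tomega stTPD ∅ = stModelOf {(Nd.root, Nd.a, 0)} := by
  refine Tomega_eq stTPD_mono (Set.empty_subset _) (stTPD_modelOf (by simp)) ?_
  rintro x hx
  right
  cases x with
  | g x y k =>
    rw [g_mem_modelOf] at hx
    exact ⟨_, .inl (.inl (.inr ⟨_, hx, rfl⟩)), rfl, by simp, by simp⟩
  | st x y k =>
    rw [st_mem_modelOf] at hx
    simp only [Set.mem_singleton_iff, Prod.mk.injEq] at hx
    obtain ⟨rfl, rfl, rfl⟩ := hx
    exact ⟨_, .inl (.inl (.inl rfl)), rfl, by simp, by simp⟩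
  | chosen x y k =>
    rw [chosen_mem_modelOf] at hx
    simp only [Set.mem_singleton_iff, Prod.mk.injEq] at hx
    exact absurd hx.1.1 hx.2
  | diffchoice x y k =>
    rw [diff_mem_modelOf] at hx
    simp_all

theorem IsPartialTree.target_ne_a {S : Set (Nd × Nd × Fin 4)} (hS : IsPartialTree S) {y : Nd}
    (h : ¬ Reached S y) : y ≠ Nd.a := by
  rintro rfl
  exact h ⟨_, _, hS.base⟩

/-- Choosing an edge across the cut extends the partial tree by that edge. -/
theorem Tomega_insert {S : Set (Nd × Nd × Fin 4)} (hS : IsPartialTree S)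
    {t : Nd × Nd × Fin 4} (ht : t ∈ cutEdges S) :
    Tomega stTPD (stModelOf S ∪ {STA.chosen t.1 t.2.1 t.2.2}) = stModelOf (insert t S) := by
  obtain ⟨hte, ⟨z, c', hz⟩, hnr⟩ := ht
  have hroot := edge_source_ne_root hte
  refine Tomega_eq stTPD_mono ?_ (stTPD_modelOf (Set.mem_insert_of_mem _ hS.base)) ?_
  · refine Set.union_subset (modelOf_mono (Set.subset_insert _ _)) ?_
    rintro _ rfl
    exact (chosen_mem_modelOf _ _ _ _).2 ⟨Set.mem_insert _ _, hroot.1⟩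
  · intro x hx
    cases x with
    | g x y k =>
      rw [g_mem_modelOf] at hx
      exact .inl (.inl ((g_mem_modelOf _ _ _ _).2 hx))
    | st x y k =>
      rw [st_mem_modelOf] at hx
      rcases hx with rfl | hx
      · refine .inr ⟨_, .inl (.inr ⟨z, c', _, hte, hS.target_ne_a hnr, hroot.2, rfl⟩),
          rfl, ?_, by simp⟩
        intro y hy
        simp only [Finset.coe_insert, Finset.coe_singleton, Set.mem_insert_iff,
          Set.mem_singleton_iff] at hy
        rcases hy with rfl | rfl | rfl
        · exact .inl ((st_mem_modelOf _ _ _ _).2 hz)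
        · exact .inl ((g_mem_modelOf _ _ _ _).2 hte)
        · exact .inr rfl
      · exact .inl (.inl ((st_mem_modelOf _ _ _ _).2 hx))
    | chosen x y k =>
      rw [chosen_mem_modelOf] at hx
      rcases hx with ⟨rfl | hx, hr⟩
      · exact .inl (.inr rfl)
      · exact .inl (.inl ((chosen_mem_modelOf _ _ _ _).2 ⟨hx, hr⟩))
    | diffchoice x y k =>
      rw [diff_mem_modelOf] at hx
      obtain ⟨t', rfl | ht', hr, hc⟩ := hx
      · exact .inr ⟨_, .inr ⟨(x, y, k), t', hc, rfl⟩, rfl, by simp, by simp⟩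
      · exact .inl (.inl ((diff_mem_modelOf _ _ _ _).2 ⟨t', ht', hr, hc⟩))

/-! ### The choices available on a partial tree -/

theorem stTheta_empty : stTheta ∅ = ∅ := by
  ext d
  simp only [Set.mem_empty_iff_false, iff_false]
  rintro ⟨⟨⟨r, ⟨z, c', t, -, -, -, rfl⟩, -, hpos, -⟩, -⟩, -⟩
  exact hpos (a := STA.st z t.1 c') (by simp)

/-- On a partial tree, the FDs admit exactly the edges across the cut. -/
theorem mem_theta_iff {S : Set (Nd × Nd × Fin 4)} (hS : IsPartialTree S) (d : STA) :
    d ∈ stTheta (stModelOf S) ↔ ∃ t ∈ cutEdges S, d = STA.chosen t.1 t.2.1 t.2.2 := by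
  constructor
  · rintro ⟨⟨⟨r, ⟨z, c', t, ht, hta, -, rfl⟩, rfl, hpos, hneg⟩, hnot⟩, -⟩
    have hz : STA.st z t.1 c' ∈ stModelOf S := hpos (by simp)
    rw [st_mem_modelOf] at hz
    refine ⟨t, ⟨ht, ⟨z, c', hz⟩, ?_⟩, rfl⟩
    rintro ⟨w, k, hw⟩
    have hdiff := hneg (STA.diffchoice t.1 t.2.1 t.2.2) (by simp)
    rw [diff_mem_modelOf] at hdiff
    -- The triple entering the target of `t` does not come from `root`, so it is a chosen one.
    have hwr : w ≠ Nd.root := by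
      intro h
      have := hS.root_only _ hw h
      simp only [Prod.mk.injEq] at this
      exact hta this.2.1
    by_cases heq : t.1 = w ∧ t.2.2 = k
    · refine hnot ((chosen_mem_modelOf _ _ _ _).2 ?_)
      rw [heq.1, heq.2]
      exact ⟨hw, hwr⟩
    · exact hdiff ⟨_, hw, hwr, rfl, not_and_or.1 heq⟩
  · rintro ⟨t, ⟨hte, ⟨z, c', hz⟩, hnr⟩, rfl⟩
    have hroot := edge_source_ne_root hte
    refine ⟨⟨⟨_, ⟨z, c', t, hte, hS.target_ne_a hnr, hroot.2, rfl⟩, rfl, ?_, ?_⟩, ?_⟩, ?_⟩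
    · intro y hy
      simp only [Finset.coe_insert, Finset.coe_singleton, Set.mem_insert_iff,
        Set.mem_singleton_iff] at hy
      rcases hy with rfl | rfl
      · exact (st_mem_modelOf _ _ _ _).2 hz
      · exact (g_mem_modelOf _ _ _ _).2 hte
    · intro b hb
      rw [Finset.mem_singleton.1 hb, diff_mem_modelOf]
      rintro ⟨⟨x, y, k⟩, ht', -, hc, -⟩
      exact hnr ⟨x, k, by rw [show t.2.1 = y from hc]; exact ht'⟩
    · rw [chosen_mem_modelOf]
      rintro ⟨h, -⟩
      exact hnr ⟨_, _, h⟩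
    · have key : ∀ u : Nd × Nd × Fin 4,
          STA.chosen u.1 u.2.1 u.2.2 ∈ stModelOf S ∪ {STA.chosen t.1 t.2.1 t.2.2} →
          u ∈ S ∨ u = t := by
        rintro ⟨x, y, k⟩ (h | h)
        · exact .inl ((chosen_mem_modelOf _ _ _ _).1 h).1
        · simp only [Set.mem_singleton_iff, STA.chosen.injEq] at h
          exact .inr (Prod.ext h.1 (Prod.ext h.2.1 h.2.2))
      rintro u u' hu hu' ⟨hy, hne⟩
      have hneq : u ≠ u' := by
        rintro rfl
        simp at hne
      rcases key u hu with h | rfl <;> rcases key u' hu' with h' | rfl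
      · exact hneq (hS.enter_once _ h _ h' hy)
      · exact hnr ⟨u.1, u.2.2, by rw [← hy]; exact h⟩
      · exact hnr ⟨u'.1, u'.2.2, by rw [hy]; exact h'⟩
      · exact hneq rfl

/-! ### Steps of the computation -/

/-- If the edge `t` is strictly cheaper than every other edge across the cut, then every step of
the computation adds `t`. -/
theorem psi_step {S : Set (Nd × Nd × Fin 4)} (hS : IsPartialTree S) {t : Nd × Nd × Fin 4}
    (ht : t ∈ cutEdges S) (hmin : ∀ u ∈ cutEdges S, u = t ∨ t.2.2 < u.2.2) {K : Set STA}
    (hK : K ∈ stPsiLeast (stModelOf S)) : K = stModelOf (insert t S) := by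
  have htΘ := (mem_theta_iff hS _).2 ⟨t, ht, rfl⟩
  obtain ⟨J, ⟨d, ⟨hd, hleast⟩, rfl⟩ | ⟨hemp, -⟩, rfl⟩ := hK
  · obtain ⟨u, hu, rfl⟩ := (mem_theta_iff hS _).1 hd
    rcases hmin u hu with rfl | hlt
    · exact Tomega_insert hS hu
    · exact absurd ⟨_, htΘ, _, _, _, _, _, _, rfl, rfl, hlt⟩ hleast
  · rw [hemp] at htΘ
    exact htΘ.elim

/-- The computation is stationary once no edge crosses the cut. -/
theorem psi_stationary {S : Set (Nd × Nd × Fin 4)} (hS : IsPartialTree S)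
    (hfr : cutEdges S = ∅) {K : Set STA}
    (hK : K ∈ stPsiLeast (stModelOf S)) : K = stModelOf S := by
  obtain ⟨J, ⟨d, ⟨hd, -⟩, -⟩ | ⟨-, rfl⟩, rfl⟩ := hK
  · obtain ⟨u, hu, -⟩ := (mem_theta_iff hS _).1 hd
    rw [hfr] at hu
    exact hu.elim
  · exact Tomega_self hS.base

theorem psi_empty {K : Set STA} (hK : K ∈ stPsiLeast ∅) :
    K = stModelOf {(Nd.root, Nd.a, 0)} := by
  obtain ⟨J, ⟨d, ⟨hd, -⟩, -⟩ | ⟨-, rfl⟩, rfl⟩ := hK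
  · rw [stTheta_empty] at hd
    exact hd.elim
  · exact Tomega_empty

theorem isPartialTree_base : IsPartialTree {(Nd.root, Nd.a, 0)} := by
  constructor <;> simp

/-- Adding an edge across the cut preserves being a partial tree. -/
theorem IsPartialTree.insert {S : Set (Nd × Nd × Fin 4)} (hS : IsPartialTree S)
    {t : Nd × Nd × Fin 4} (ht : t ∈ cutEdges S) : IsPartialTree (insert t S) where
  base := Set.mem_insert_of_mem _ hS.base
  root_only := by
    rintro u (rfl | hu) hr
    · exact absurd hr (edge_source_ne_root ht.1).1
    · exact hS.root_only u hu hr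
  enter_once := by
    rintro u (rfl | hu) u' (rfl | hu') hy
    · rfl
    · exact absurd ⟨u'.1, u'.2.2, by rw [hy]; exact hu'⟩ ht.2.2
    · exact absurd ⟨u.1, u.2.2, by rw [← hy]; exact hu⟩ ht.2.2
    · exact hS.enter_once u hu u' hu' hy

/-! ### The run of Prim's algorithm -/

theorem cutEdges_base :
    cutEdges {(Nd.root, Nd.a, 0)} = {(Nd.a, Nd.b, 1), (Nd.a, Nd.c, 3)} := by
  ext ⟨x, y, k⟩
  simp only [cutEdges, Reached, stEdges, Set.mem_ofPred_eq, Set.mem_insert_iff,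
    Set.mem_singleton_iff, Prod.mk.injEq]
  cases x <;> cases y <;> simp

theorem cutEdges_two :
    cutEdges {(Nd.a, Nd.b, 1), (Nd.root, Nd.a, 0)} = {(Nd.b, Nd.c, 2), (Nd.a, Nd.c, 3)} := by
  ext ⟨x, y, k⟩
  simp only [cutEdges, Reached, stEdges, Set.mem_ofPred_eq, Set.mem_insert_iff,
    Set.mem_singleton_iff, Prod.mk.injEq]
  cases x <;> cases y <;> simp

theorem stS1_eq :
    stS1 = {(Nd.b, Nd.c, 2), (Nd.a, Nd.b, 1), (Nd.root, Nd.a, 0)} := by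
  ext t
  simp only [stS1, Set.mem_insert_iff, Set.mem_singleton_iff]
  tauto

theorem cutEdges_S1 : cutEdges stS1 = ∅ := by
  ext ⟨x, y, k⟩
  simp only [cutEdges, Reached, stEdges, stS1, Set.mem_ofPred_eq, Set.mem_insert_iff,
    Set.mem_singleton_iff, Prod.mk.injEq]
  cases x <;> cases y <;> simp

theorem least_computation_limit {Iseq : ℕ → Set STA} (h : stIsLeastComputation Iseq) :
    ⋃ n, Iseq n = stModelOf stS1 := by
  obtain ⟨h0, hstep⟩ := h
  have e1 : (Nd.a, Nd.b, 1) ∈ cutEdges {(Nd.root, Nd.a, 0)} := by simp [cutEdges_base]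
  have e2 : (Nd.b, Nd.c, 2) ∈ cutEdges {(Nd.a, Nd.b, 1), (Nd.root, Nd.a, 0)} := by
    simp [cutEdges_two]
  have t1 := isPartialTree_base.insert e1
  have t2 := t1.insert e2
  have h1 : Iseq 1 = stModelOf {(Nd.root, Nd.a, 0)} := psi_empty (h0 ▸ hstep 0)
  have h2 : Iseq 2 = stModelOf {(Nd.a, Nd.b, 1), (Nd.root, Nd.a, 0)} := by
    refine psi_step isPartialTree_base e1 ?_ (h1 ▸ hstep 1)
    rw [cutEdges_base]
    rintro u (rfl | rfl)
    · exact .inl rfl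
    · exact .inr (by decide)
  have h3 : Iseq 3 = stModelOf stS1 := by
    rw [stS1_eq]
    refine psi_step t1 e2 ?_ (h2 ▸ hstep 2)
    rw [cutEdges_two]
    rintro u (rfl | rfl)
    · exact .inl rfl
    · exact .inr (by decide)
  have hlim : ∀ n, Iseq (n + 3) = stModelOf stS1 := by
    intro n
    induction n with
    | zero => exact h3
    | succ n ih => exact psi_stationary (stS1_eq ▸ t2) cutEdges_S1 (ih ▸ hstep (n + 3))
  refine Set.Subset.antisymm (Set.iUnion_subset fun n => ?_) (h3 ▸ Set.subset_iUnion Iseq 3)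
  match n with
  | 0 => simp [h0]
  | 1 => rw [h1]; exact modelOf_mono (by simp [stS1])
  | 2 => rw [h2]; exact modelOf_mono (by simp [stS1, Set.insert_subset_iff])
  | n + 3 => rw [hlim n]

theorem stOf_limit {Iseq : ℕ → Set STA} (h : stIsLeastComputation Iseq) :
    stOf (⋃ n, Iseq n) = stS1 := by
  rw [least_computation_limit h]
  ext t
  exact st_mem_modelOf _ _ _ _

theorem bc_mem_stS1 : (Nd.b, Nd.c, 2) ∈ stS1 := by simp [stS1]

/-- every inflationary least choice fixpoint of Prim's program
has st-atoms exactly `{st(root,a,0), st(a,b,1), st(b,c,2)}` (the minimum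
spanning tree); in particular the choice models with st-atoms `stS2` and `stS3`
are not inflationary least choice fixpoints, so the least choice fixpoint
computation is not complete for choice models. -/
theorem prim_least_fixpoint_is_mst :
    (∀ Iseq : ℕ → Set STA, stIsLeastComputation Iseq →
      stOf (⋃ n, Iseq n) = stS1) ∧
    (∀ M : Set STA, isStableModel stFoe M → stOf M = stS2 →
      ¬ ∃ Iseq, stIsLeastComputation Iseq ∧ M = ⋃ n, Iseq n) ∧
    (∀ M : Set STA, isStableModel stFoe M → stOf M = stS3 →
      ¬ ∃ Iseq, stIsLeastComputation Iseq ∧ M = ⋃ n, Iseq n) := by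
  refine ⟨fun Iseq h => stOf_limit h, ?_, ?_⟩
  · rintro M - hM ⟨Iseq, h, rfl⟩
    rw [stOf_limit h] at hM
    have := hM ▸ bc_mem_stS1
    simp [stS2] at this
  · rintro M - hM ⟨Iseq, h, rfl⟩
    rw [stOf_limit h] at hM
    have := hM ▸ bc_mem_stS1
    simp [stS3] at this
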